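/- For every integer N ≥ 3 there exists a nonnegative Borel function f_N ∈ L¹((0,1)²) with ∫ f_N dλ ≤ 1/N such that for every x ∈ (0,1)² there is an open axis-parallel rectangle B ⊂ (0,1)² containing x with diameter less than 1/N and (1/λ(B)) ∫_B f_N dλ > N. -/

import Mathlib

open MeasureTheory Set

/-- Some open rectangle in the open unit square contains `z`, has side lengths at most `D`, and the
average of `f` over it exceeds `N`. -/
def LargeAverageAt (N D : ℝ) (f : ℝ × ℝ → ℝ) (z : ℝ × ℝ) : Prop :=
  ∃ a b c d : ℝ, z ∈ Ioo a b ×ˢ Ioo c d ∧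
    Ioo a b ×ˢ Ioo c d ⊆ Ioo (0:ℝ) 1 ×ˢ Ioo (0:ℝ) 1 ∧ b - a ≤ D ∧ d - c ≤ D ∧
    N * volume.real (Ioo a b ×ˢ Ioo c d) < ∫ y in Ioo a b ×ˢ Ioo c d, f y

/-- The points of the open unit square at which `LargeAverageAt N D f` fails. -/
def smallAverageSet (N D : ℝ) (f : ℝ × ℝ → ℝ) : Set (ℝ × ℝ) :=
  {z ∈ Ioo (0:ℝ) 1 ×ˢ Ioo (0:ℝ) 1 | ¬ LargeAverageAt N D f z}

theorem LargeAverageAt.mono {N D D' : ℝ} {f g : ℝ × ℝ → ℝ} {z : ℝ × ℝ}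
    (h : LargeAverageAt N D f z) (hD : D ≤ D') (hf : Integrable f) (hg : Integrable g)
    (hfg : ∀ x, f x ≤ g x) : LargeAverageAt N D' g z := by
  obtain ⟨a, b, c, d, hz, hsub, hab, hcd, hlt⟩ := h
  exact ⟨a, b, c, d, hz, hsub, hab.trans hD, hcd.trans hD,
    hlt.trans_le (integral_mono hf.integrableOn hg.integrableOn hfg)⟩

theorem volume_preimage_smul_sub {b : ℝ} (hb : 0 < b) (v : ℝ × ℝ) (s : Set (ℝ × ℝ)) :
    volume ((fun z : ℝ × ℝ => b • z - v) ⁻¹' s) = ENNReal.ofReal (b ^ 2)⁻¹ * volume s := by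
  have h1 := Measure.addHaar_preimage_smul (volume : Measure (ℝ × ℝ)) hb.ne'
    ((fun z => z + -v) ⁻¹' s)
  rw [measure_preimage_add_right, ← preimage_comp] at h1
  have h2 : |(b ^ Module.finrank ℝ (ℝ × ℝ))⁻¹| = (b ^ 2)⁻¹ := by
    rw [abs_of_nonneg (by positivity)]; simp
  rw [h2] at h1
  rw [← h1]
  simp [Function.comp_def, sub_eq_add_neg]

theorem integral_comp_smul_sub {b : ℝ} (hb : 0 < b) (v : ℝ × ℝ) (f : ℝ × ℝ → ℝ) :
    ∫ z, f (b • z - v) = (b ^ 2)⁻¹ * ∫ z, f z := by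
  have h1 := Measure.integral_comp_smul (volume : Measure (ℝ × ℝ)) (fun z => f (z - v)) b
  rw [integral_sub_right_eq_self f v] at h1
  rw [h1, abs_of_nonneg (by positivity)]
  simp

theorem integrable_comp_smul_sub {b : ℝ} (hb : 0 < b) (v : ℝ × ℝ) {f : ℝ × ℝ → ℝ}
    (hf : Integrable f) : Integrable (fun z => f (b • z - v)) :=
  (hf.comp_sub_right v).comp_smul hb.ne'

theorem LargeAverageAt.comp_smul_sub {N D : ℝ} {f : ℝ × ℝ → ℝ} {z : ℝ × ℝ} {b i j : ℕ}
    (hi : i < b) (hj : j < b) (h : LargeAverageAt N D f ((b:ℝ) • z - ((i:ℝ), (j:ℝ)))) :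
    LargeAverageAt N (D / b) (fun z => f ((b:ℝ) • z - ((i:ℝ), (j:ℝ)))) z := by
  obtain ⟨p, q, r, s, hz, hsub, hab, hcd, hlt⟩ := h
  have hb : (0:ℝ) < b := by exact_mod_cast (Nat.zero_le i).trans_lt hi
  have hi' : (i:ℝ) + 1 ≤ b := by exact_mod_cast hi
  have hj' : (j:ℝ) + 1 ≤ b := by exact_mod_cast hj
  set φ : ℝ × ℝ → ℝ × ℝ := fun z => (b:ℝ) • z - ((i:ℝ), (j:ℝ)) with hφ
  have hR : Ioo ((p + i) / b) ((q + i) / b) ×ˢ Ioo ((r + j) / b) ((s + j) / b)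
      = φ ⁻¹' (Ioo p q ×ˢ Ioo r s) := by
    ext ⟨x, y⟩
    simp only [hφ, mem_prod, mem_Ioo, mem_preimage, Prod.smul_mk, Prod.mk_sub_mk, smul_eq_mul,
      div_lt_iff₀ hb, lt_div_iff₀ hb, lt_sub_iff_add_lt, sub_lt_iff_lt_add, mul_comm]
  refine ⟨(p + i) / b, (q + i) / b, (r + j) / b, (s + j) / b, ?_, ?_, ?_, ?_, ?_⟩
  · rw [hR]; exact hz
  · rw [hR]
    rintro ⟨x, y⟩ hxy
    have := hsub hxy
    simp only [mem_prod, mem_Ioo, hφ, Prod.smul_mk, Prod.mk_sub_mk, smul_eq_mul] at this ⊢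
    obtain ⟨⟨h1, h2⟩, h3, h4⟩ := this
    have hi0 : (0:ℝ) ≤ i := i.cast_nonneg
    have hj0 : (0:ℝ) ≤ j := j.cast_nonneg
    refine ⟨⟨?_, ?_⟩, ?_, ?_⟩
    · exact pos_of_mul_pos_right (a := (b:ℝ)) (by linarith) hb.le
    · exact lt_of_mul_lt_mul_left (a := (b:ℝ)) (by linarith) hb.le
    · exact pos_of_mul_pos_right (a := (b:ℝ)) (by linarith) hb.le
    · exact lt_of_mul_lt_mul_left (a := (b:ℝ)) (by linarith) hb.le
  · rw [← sub_div]; gcongr; linarith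
  · rw [← sub_div]; gcongr; linarith
  · have hm : MeasurableSet (Ioo p q ×ˢ Ioo r s) := measurableSet_Ioo.prod measurableSet_Ioo
    have hφm : Measurable φ := by fun_prop
    have hint : ∫ y in φ ⁻¹' (Ioo p q ×ˢ Ioo r s), f (φ y)
        = ((b:ℝ) ^ 2)⁻¹ * ∫ y in Ioo p q ×ˢ Ioo r s, f y := by
      rw [← integral_indicator (hφm hm), ← integral_indicator hm, ← integral_comp_smul_sub hb]
      rfl
    rw [hR, hint, measureReal_def, volume_preimage_smul_sub hb, ENNReal.toReal_mul,
      ENNReal.toReal_ofReal (by positivity), ← measureReal_def, mul_left_comm]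
    gcongr

/-- The function `g` together with `b × b` copies of `f` on the cells of the grid of mesh `1 / b`. -/
def addTiling (b : ℕ) (g f : ℝ × ℝ → ℝ) (z : ℝ × ℝ) : ℝ :=
  g z + ∑ i ∈ Finset.range b, ∑ j ∈ Finset.range b, f ((b:ℝ) • z - ((i:ℝ), (j:ℝ)))

section addTiling

variable {b : ℕ} {f g : ℝ × ℝ → ℝ}

theorem measurable_addTiling (hf : Measurable f) (hg : Measurable g) :
    Measurable (addTiling b g f) := by
  unfold addTiling
  fun_prop

theorem integrable_addTiling (hb : 0 < b) (hf : Integrable f) (hg : Integrable g) :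
    Integrable (addTiling b g f) :=
  hg.add <| integrable_finsetSum _ fun _ _ => integrable_finsetSum _ fun _ _ =>
    integrable_comp_smul_sub (by exact_mod_cast hb) _ hf

theorem integral_addTiling (hb : 0 < b) (hf : Integrable f) (hg : Integrable g) :
    ∫ z, addTiling b g f z = (∫ z, g z) + ∫ z, f z := by
  have hb' : (0:ℝ) < b := by exact_mod_cast hb
  have hi : ∀ i j : ℕ, Integrable (fun z : ℝ × ℝ => f ((b:ℝ) • z - ((i:ℝ), (j:ℝ)))) :=
    fun i j => integrable_comp_smul_sub hb' _ hf
  unfold addTiling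
  rw [integral_add hg (integrable_finsetSum _ fun i _ => integrable_finsetSum _ fun j _ => hi i j),
    integral_finsetSum _ fun i _ => integrable_finsetSum _ fun j _ => hi i j]
  simp_rw [integral_finsetSum _ fun j _ => hi _ j, integral_comp_smul_sub hb']
  simp
  field_simp

theorem addTiling_nonneg (hf : ∀ z, 0 ≤ f z) (hg : ∀ z, 0 ≤ g z) (z : ℝ × ℝ) :
    0 ≤ addTiling b g f z :=
  add_nonneg (hg z) <| Finset.sum_nonneg fun _ _ => Finset.sum_nonneg fun _ _ => hf _

theorem le_addTiling (hf : ∀ z, 0 ≤ f z) (z : ℝ × ℝ) : g z ≤ addTiling b g f z :=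
  le_add_of_nonneg_right <| Finset.sum_nonneg fun _ _ => Finset.sum_nonneg fun _ _ => hf _

theorem comp_smul_sub_le_addTiling (hf : ∀ z, 0 ≤ f z) (hg : ∀ z, 0 ≤ g z) {i j : ℕ} (hi : i < b)
    (hj : j < b) (z : ℝ × ℝ) : f ((b:ℝ) • z - ((i:ℝ), (j:ℝ))) ≤ addTiling b g f z := by
  refine le_add_of_nonneg_of_le (hg z) ?_
  refine le_trans ?_ (Finset.single_le_sum (fun i _ => Finset.sum_nonneg fun j _ => hf _)
    (Finset.mem_range.2 hi))
  exact Finset.single_le_sum (f := fun j : ℕ => f ((b:ℝ) • z - ((i:ℝ), (j:ℝ))))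
    (fun j _ => hf _) (Finset.mem_range.2 hj)

/-- If `g` has large averages at the cells `(i, j)` with `j < h i`, then the small average set of
`addTiling b g f` consists, up to grid lines, of scaled copies of that of `f` in the other cells. -/
theorem volume_smallAverageSet_addTiling_le {N D D' ρ : ℝ} {h : ℕ → ℕ} (hb : 0 < b)
    (hf : Integrable f) (hg : Integrable g) (hf0 : ∀ z, 0 ≤ f z) (hg0 : ∀ z, 0 ≤ g z)
    (hD : D / b ≤ D')
    (hlarge : ∀ i < b, ∀ j < h i, ∀ z : ℝ × ℝ,
      (b:ℝ) • z - ((i:ℝ), (j:ℝ)) ∈ Ioo (0:ℝ) 1 ×ˢ Ioo (0:ℝ) 1 → LargeAverageAt N D' g z)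
    (hρ : ∑ i ∈ Finset.range b, ((b - h i : ℕ) : ℝ) ≤ ρ * b ^ 2) :
    volume (smallAverageSet N D' (addTiling b g f)) ≤
      ENNReal.ofReal ρ * volume (smallAverageSet N D f) := by
  have hb' : (0:ℝ) < b := by exact_mod_cast hb
  set φ : ℕ → ℕ → ℝ × ℝ → ℝ × ℝ := fun i j z => (b:ℝ) • z - ((i:ℝ), (j:ℝ)) with hφ
  set L : Set ℝ := range fun i : ℕ => (i:ℝ) / b with hL
  have hL0 : volume L = 0 := (countable_range _).measure_zero _
  have hlines : volume (L ×ˢ (univ : Set ℝ) ∪ (univ : Set ℝ) ×ˢ L) = 0 := by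
    refine measure_union_null ?_ ?_ <;> rw [Measure.volume_eq_prod, Measure.prod_prod, hL0] <;> simp
  have hcell : ∀ x ∈ Ioo (0:ℝ) 1, x ∉ L → ∃ i < b, (b:ℝ) * x - i ∈ Ioo (0:ℝ) 1 := by
    intro x hx hxL
    have h0 : 0 ≤ (b:ℝ) * x := by have := hx.1; positivity
    refine ⟨⌊(b:ℝ) * x⌋₊, ?_, ?_, ?_⟩
    · rw [Nat.floor_lt h0]
      nlinarith [hx.2]
    · refine sub_pos.2 (lt_of_le_of_ne (Nat.floor_le h0) fun he => hxL ⟨⌊(b:ℝ) * x⌋₊, ?_⟩)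
      simp only [he]
      field_simp
    · linarith [Nat.lt_floor_add_one ((b:ℝ) * x)]
  have hsub : smallAverageSet N D' (addTiling b g f) ⊆
      (L ×ˢ (univ : Set ℝ) ∪ (univ : Set ℝ) ×ˢ L) ∪
        ⋃ i ∈ Finset.range b, ⋃ j ∈ Finset.Ico (h i) b, φ i j ⁻¹' smallAverageSet N D f := by
    rintro ⟨x, y⟩ ⟨⟨hx, hy⟩, hbad⟩
    by_cases hxL : x ∈ L
    · exact Or.inl (Or.inl ⟨hxL, trivial⟩)
    by_cases hyL : y ∈ L
    · exact Or.inl (Or.inr ⟨trivial, hyL⟩)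
    obtain ⟨i, hi, hix⟩ := hcell x hx hxL
    obtain ⟨j, hj, hjy⟩ := hcell y hy hyL
    have hmem : φ i j (x, y) ∈ Ioo (0:ℝ) 1 ×ˢ Ioo (0:ℝ) 1 := ⟨hix, hjy⟩
    have hF := integrable_addTiling hb hf hg
    refine Or.inr ?_
    simp only [mem_iUnion, Finset.mem_range, Finset.mem_Ico, exists_prop]
    refine ⟨i, hi, j, ⟨?_, hj⟩, hmem, fun hgood => hbad ?_⟩
    · by_contra! hlt
      exact hbad ((hlarge i hi j hlt _ hmem).mono le_rfl hg hF (le_addTiling hf0))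
    · exact (hgood.comp_smul_sub hi hj).mono hD (integrable_comp_smul_sub hb' _ hf) hF
        (comp_smul_sub_le_addTiling hf0 hg0 hi hj)
  calc volume (smallAverageSet N D' (addTiling b g f))
      ≤ 0 + ∑ i ∈ Finset.range b, ∑ j ∈ Finset.Ico (h i) b,
          ENNReal.ofReal ((b:ℝ) ^ 2)⁻¹ * volume (smallAverageSet N D f) := by
        refine (measure_mono hsub).trans ((measure_union_le _ _).trans ?_)
        refine add_le_add hlines.le ((measure_biUnion_finset_le _ _).trans ?_)
        refine Finset.sum_le_sum fun i _ => (measure_biUnion_finset_le _ _).trans ?_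
        exact Finset.sum_le_sum fun j _ => (volume_preimage_smul_sub hb' _ _).le
    _ = ENNReal.ofReal ((∑ i ∈ Finset.range b, ((b - h i : ℕ) : ℝ)) * ((b:ℝ) ^ 2)⁻¹) *
          volume (smallAverageSet N D f) := by
        rw [ENNReal.ofReal_mul (by positivity), ← Nat.cast_sum, ENNReal.ofReal_natCast]
        simp only [zero_add, Finset.sum_const, Nat.card_Ico, nsmul_eq_mul, Nat.cast_sum,
          Finset.sum_mul, mul_assoc]
    _ ≤ _ := by
        gcongr
        rw [← div_eq_mul_inv]
        exact div_le_of_le_mul₀ (by positivity)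
          (by by_contra! hlt; have : 0 ≤ ρ * (b:ℝ) ^ 2 := le_trans (by positivity) hρ
              nlinarith [mul_neg_of_neg_of_pos hlt (pow_pos hb' 2)]) hρ

end addTiling

/-- A mass `c / b` spread over the square of side `1 / b` at the origin. -/
noncomputable def cornerMass (c : ℝ) (b : ℕ) : ℝ × ℝ → ℝ :=
  (Ioo (0:ℝ) (1 / b) ×ˢ Ioo (0:ℝ) (1 / b)).indicator fun _ => c * b

theorem measureReal_Ioo_prod_Ioo {a b c d : ℝ} (hab : a ≤ b) (hcd : c ≤ d) :
    volume.real (Ioo a b ×ˢ Ioo c d) = (b - a) * (d - c) := by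
  rw [Measure.volume_eq_prod, measureReal_prod_prod, Real.volume_real_Ioo_of_le hab,
    Real.volume_real_Ioo_of_le hcd]

theorem volume_Ioo_prod_Ioo_ne_top (a b c d : ℝ) : volume (Ioo a b ×ˢ Ioo c d) ≠ ⊤ := by
  rw [Measure.volume_eq_prod, Measure.prod_prod, Real.volume_Ioo, Real.volume_Ioo]
  exact ENNReal.mul_ne_top ENNReal.ofReal_ne_top ENNReal.ofReal_ne_top

section cornerMass

variable {c : ℝ} {b : ℕ}

theorem measurable_cornerMass : Measurable (cornerMass c b) :=
  measurable_const.indicator (measurableSet_Ioo.prod measurableSet_Ioo)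

theorem cornerMass_nonneg (hc : 0 ≤ c) (z : ℝ × ℝ) : 0 ≤ cornerMass c b z :=
  indicator_nonneg (fun _ _ => by positivity) z

theorem integrable_cornerMass : Integrable (cornerMass c b) :=
  (integrable_indicator_iff (measurableSet_Ioo.prod measurableSet_Ioo)).2
    (integrableOn_const (volume_Ioo_prod_Ioo_ne_top _ _ _ _))

theorem integral_cornerMass (hb : 0 < b) : ∫ z, cornerMass c b z = c / b := by
  have hb' : (0:ℝ) < b := by exact_mod_cast hb
  rw [cornerMass, integral_indicator (measurableSet_Ioo.prod measurableSet_Ioo), setIntegral_const,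
    measureReal_Ioo_prod_Ioo (by positivity) (by positivity), smul_eq_mul]
  field_simp
  ring

theorem largeAverageAt_cornerMass {N : ℝ} (hN : 0 ≤ N) (hc : N < c) {i j : ℕ}
    (hij : j < b / (i + 1)) {z : ℝ × ℝ}
    (hz : (b:ℝ) • z - ((i:ℝ), (j:ℝ)) ∈ Ioo (0:ℝ) 1 ×ˢ Ioo (0:ℝ) 1) :
    LargeAverageAt N 1 (cornerMass c b) z := by
  have hmul : (j + 1) * (i + 1) ≤ b := (Nat.le_div_iff_mul_le i.succ_pos).1 hij
  have hi : i + 1 ≤ b := by nlinarith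
  have hj : j + 1 ≤ b := by nlinarith
  have hb' : (0:ℝ) < b := by exact_mod_cast (Nat.succ_pos i).trans_le hi
  have hmul' : ((j:ℝ) + 1) * (i + 1) ≤ b := by exact_mod_cast hmul
  have hi' : (i:ℝ) + 1 ≤ b := by exact_mod_cast hi
  have hj' : (j:ℝ) + 1 ≤ b := by exact_mod_cast hj
  have hi1 : ((i:ℝ) + 1) / b ≤ 1 := (div_le_one hb').2 hi'
  have hj1 : ((j:ℝ) + 1) / b ≤ 1 := (div_le_one hb').2 hj'
  have hi0 : (0:ℝ) ≤ i := i.cast_nonneg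
  have hj0 : (0:ℝ) ≤ j := j.cast_nonneg
  refine ⟨0, (i + 1) / b, 0, (j + 1) / b, ?_, ?_, by linarith, by linarith, ?_⟩
  · obtain ⟨x, y⟩ := z
    simp only [mem_prod, mem_Ioo, Prod.smul_mk, Prod.mk_sub_mk, smul_eq_mul] at hz ⊢
    obtain ⟨⟨h1, h2⟩, h3, h4⟩ := hz
    rw [lt_div_iff₀ hb', lt_div_iff₀ hb']
    refine ⟨⟨?_, by linarith⟩, ?_, by linarith⟩
    · exact pos_of_mul_pos_right (a := (b:ℝ)) (by linarith) hb'.le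
    · exact pos_of_mul_pos_right (a := (b:ℝ)) (by linarith) hb'.le
  · exact prod_mono (Ioo_subset_Ioo_right hi1) (Ioo_subset_Ioo_right hj1)
  · have hsub : Ioo (0:ℝ) (1 / b) ×ˢ Ioo (0:ℝ) (1 / b) ⊆
        Ioo (0:ℝ) ((i + 1) / b) ×ˢ Ioo (0:ℝ) ((j + 1) / b) :=
      prod_mono (Ioo_subset_Ioo_right (by gcongr; linarith))
        (Ioo_subset_Ioo_right (by gcongr; linarith))
    have hint : ∫ y in Ioo (0:ℝ) ((i + 1) / b) ×ˢ Ioo (0:ℝ) ((j + 1) / b), cornerMass c b y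
        = c / b := by
      rw [cornerMass, setIntegral_indicator (measurableSet_Ioo.prod measurableSet_Ioo),
        inter_eq_self_of_subset_right hsub,
        ← integral_indicator (measurableSet_Ioo.prod measurableSet_Ioo)]
      exact integral_cornerMass (by omega)
    rw [hint, measureReal_Ioo_prod_Ioo (by positivity) (by positivity)]
    calc N * (((i + 1) / b - 0) * ((j + 1) / b - 0))
        = N * (((j + 1) * (i + 1)) / b / b) := by ring
      _ ≤ N * (b / b / b) := by gcongr
      _ = N / b := by rw [div_self hb'.ne']; ring
      _ < c / b := by gcongr

end cornerMass

theorem sum_range_sub_div_le (b : ℕ) :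
    ∑ i ∈ Finset.range b, ((b - b / (i + 1) : ℕ) : ℝ) ≤
      (1 - (Real.log b - 1) / b) * b ^ 2 := by
  rcases Nat.eq_zero_or_pos b with rfl | hb
  · simp
  have hb' : (0:ℝ) < b := by exact_mod_cast hb
  have hH : Real.log b ≤ ∑ i ∈ Finset.range b, ((i:ℝ) + 1)⁻¹ := by
    have h := log_add_one_le_harmonic b
    rw [harmonic] at h
    push_cast at h
    exact (Real.log_le_log hb' (by linarith)).trans h
  calc ∑ i ∈ Finset.range b, ((b - b / (i + 1) : ℕ) : ℝ)
      ≤ ∑ i ∈ Finset.range b, ((b:ℝ) - b * ((i:ℝ) + 1)⁻¹ + 1) := by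
        refine Finset.sum_le_sum fun i _ => ?_
        rw [Nat.cast_sub (Nat.div_le_self _ _)]
        have := Nat.lt_floor_add_one ((b:ℝ) / ((i + 1 : ℕ) : ℝ))
        rw [Nat.floor_div_eq_div] at this
        push_cast at this
        rw [div_eq_mul_inv] at this
        linarith
    _ = b * b - b * (∑ i ∈ Finset.range b, ((i:ℝ) + 1)⁻¹) + b := by
        rw [Finset.sum_add_distrib, Finset.sum_sub_distrib, ← Finset.mul_sum]
        simp
    _ ≤ b * b - b * Real.log b + b := by gcongr
    _ = _ := by field_simp; ring

theorem exists_volume_smallAverageSet_le_pow {N c : ℝ} (hN : 0 ≤ N) (hc : N < c) {b : ℕ}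
    (hb : 0 < b) (K : ℕ) :
    ∃ f : ℝ × ℝ → ℝ, Measurable f ∧ (∀ z, 0 ≤ f z) ∧ Integrable f ∧ ∫ z, f z = K * (c / b) ∧
      volume (smallAverageSet N 1 f) ≤ ENNReal.ofReal (1 - (Real.log b - 1) / b) ^ K := by
  induction K with
  | zero =>
    refine ⟨fun _ => 0, measurable_const, fun _ => le_rfl, integrable_zero _ _ _, by simp, ?_⟩
    calc volume (smallAverageSet N 1 fun _ => 0)
        ≤ volume (Ioo (0:ℝ) 1 ×ˢ Ioo (0:ℝ) 1) := measure_mono fun _ h => h.1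
      _ = _ := by rw [Measure.volume_eq_prod, Measure.prod_prod]; simp
  | succ K ih =>
    obtain ⟨f, hfm, hf0, hfi, hint, hvol⟩ := ih
    have hg0 := cornerMass_nonneg (b := b) (hN.trans hc.le)
    refine ⟨addTiling b (cornerMass c b) f, measurable_addTiling hfm measurable_cornerMass,
      addTiling_nonneg hf0 hg0, integrable_addTiling hb hfi integrable_cornerMass, ?_, ?_⟩
    · rw [integral_addTiling hb hfi integrable_cornerMass, integral_cornerMass hb, hint]
      push_cast; ring
    · rw [pow_succ']
      refine (volume_smallAverageSet_addTiling_le (D := 1) hb hfi integrable_cornerMass hf0 hg0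
        ?_ (fun i _ j hj z hz => largeAverageAt_cornerMass hN hc hj hz)
        (sum_range_sub_div_le b)).trans (by gcongr)
      exact (div_le_one (by exact_mod_cast hb)).2 (by exact_mod_cast hb)

theorem exists_volume_smallAverageSet_le {N : ℝ} (hN : 0 ≤ N) {δ ε : ℝ} (hδ : 0 < δ) (hε : 0 < ε)
    {M : ℕ} (hM : 0 < M) :
    ∃ f : ℝ × ℝ → ℝ, Measurable f ∧ (∀ z, 0 ≤ f z) ∧ Integrable f ∧ ∫ z, f z ≤ δ ∧
      volume (smallAverageSet N (1 / M) f) ≤ ENNReal.ofReal ε := by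
  set κ : ℝ := δ / (N + 1) with hκ
  have hκ0 : 0 < κ := by positivity
  have hlog : Filter.Tendsto (fun b : ℕ => Real.log b) Filter.atTop Filter.atTop :=
    Real.tendsto_log_atTop.comp tendsto_natCast_atTop_atTop
  obtain ⟨b, hb, hbκ, hbl, hbl1⟩ := ((Filter.eventually_gt_atTop 0).and
    ((tendsto_natCast_atTop_atTop (R := ℝ).eventually_ge_atTop (2 / κ)).and
    ((hlog.eventually_ge_atTop (1 - Real.log ε * (2 / κ))).and
      (hlog.eventually_ge_atTop 1)))).exists
  have hb' : (0:ℝ) < b := by exact_mod_cast hb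
  have hfl := Nat.floor_le (show 0 ≤ κ * b by positivity)
  have hfl' := Nat.lt_floor_add_one (κ * b)
  set K := ⌊κ * b⌋₊
  obtain ⟨f, hfm, hf0, hfi, hint, hvol⟩ :=
    exists_volume_smallAverageSet_le_pow hN (lt_add_one N) hb K
  have hvol' : volume (smallAverageSet N 1 f) ≤ ENNReal.ofReal ε := by
    refine hvol.trans ?_
    have h1 : 1 - (Real.log b - 1) / b ≤ Real.exp (-((Real.log b - 1) / b)) :=
      Real.one_sub_le_exp_neg _
    calc ENNReal.ofReal (1 - (Real.log b - 1) / b) ^ K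
        ≤ ENNReal.ofReal (Real.exp (-((Real.log b - 1) / b))) ^ K := by gcongr
      _ = ENNReal.ofReal (Real.exp (K * -((Real.log b - 1) / b))) := by
          rw [← ENNReal.ofReal_pow (Real.exp_nonneg _), ← Real.exp_nat_mul]
      _ ≤ ENNReal.ofReal (Real.exp (Real.log ε)) := by
          gcongr
          have hK : κ / 2 * b ≤ K := by
            rw [div_le_iff₀ hκ0] at hbκ
            linarith
          have h2 : κ / 2 * (Real.log b - 1) ≤ K * ((Real.log b - 1) / b) := by
            calc κ / 2 * (Real.log b - 1) = κ / 2 * b * ((Real.log b - 1) / b) := by field_simp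
              _ ≤ _ := by gcongr
          have h3 : κ / 2 * (-(Real.log ε * (2 / κ))) ≤ κ / 2 * (Real.log b - 1) := by
            gcongr
            linarith
          have h4 : κ / 2 * (-(Real.log ε * (2 / κ))) = -Real.log ε := by field_simp
          linarith
      _ = _ := by rw [Real.exp_log hε]
  refine ⟨addTiling M 0 f, measurable_addTiling hfm measurable_const,
    addTiling_nonneg hf0 fun _ => le_rfl, integrable_addTiling hM hfi (integrable_zero _ _ _),
    ?_, ?_⟩
  · rw [integral_addTiling hM hfi (integrable_zero _ _ _)]
    simp only [Pi.zero_apply, integral_zero, zero_add, hint]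
    calc K * ((N + 1) / b) ≤ κ * b * ((N + 1) / b) := by gcongr
      _ = δ := by rw [hκ]; field_simp
  · refine (volume_smallAverageSet_addTiling_le (D := 1) (h := 0) (ρ := 1) hM hfi
      (integrable_zero _ _ _) hf0 (fun _ => le_rfl) le_rfl ?_ ?_).trans (by simpa using hvol')
    · intro i _ j hj
      simp at hj
    · simp [sq]

theorem LargeAverageAt.exists_diam_lt {N D r : ℝ} {f : ℝ × ℝ → ℝ} {z : ℝ × ℝ}
    (h : LargeAverageAt N D f z) (hD : D < r) :
    ∃ a b c d : ℝ, z ∈ Ioo a b ×ˢ Ioo c d ∧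
      Ioo a b ×ˢ Ioo c d ⊆ Ioo (0:ℝ) 1 ×ˢ Ioo (0:ℝ) 1 ∧
      Metric.diam (Ioo a b ×ˢ Ioo c d) < r ∧
      (∫ y in Ioo a b ×ˢ Ioo c d, f y) > N * (volume (Ioo a b ×ˢ Ioo c d)).toReal := by
  obtain ⟨a, b, c, d, hz, hsub, hab, hcd, hlt⟩ := h
  refine ⟨a, b, c, d, hz, hsub, lt_of_le_of_lt ?_ hD, hlt⟩
  refine Metric.diam_le_of_forall_dist_le ?_ ?_
  · linarith [hz.1.1.trans hz.1.2]
  · intro x hx y hy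
    rw [Prod.dist_eq]
    exact max_le ((Real.dist_le_of_mem_Icc (Ioo_subset_Icc_self hx.1)
      (Ioo_subset_Icc_self hy.1)).trans hab) ((Real.dist_le_of_mem_Icc
      (Ioo_subset_Icc_self hx.2) (Ioo_subset_Icc_self hy.2)).trans hcd)

theorem largeAverageAt_of_isOpen {N c D : ℝ} (hc : N < c) (hD : 0 < D) {f : ℝ × ℝ → ℝ}
    (hf : Integrable f) {V : Set (ℝ × ℝ)} (hV : IsOpen V) (hfV : ∀ z ∈ V, c ≤ f z) {z : ℝ × ℝ}
    (hzV : z ∈ V) (hz : z ∈ Ioo (0:ℝ) 1 ×ˢ Ioo (0:ℝ) 1) : LargeAverageAt N D f z := by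
  obtain ⟨r, hr, hball⟩ := Metric.isOpen_iff.1 (hV.inter (isOpen_Ioo.prod isOpen_Ioo)) z ⟨hzV, hz⟩
  set s := min r (D / 2) with hs
  have hs0 : 0 < s := lt_min hr (by positivity)
  have hsD : s ≤ D / 2 := min_le_right _ _
  have hsub : Ioo (z.1 - s) (z.1 + s) ×ˢ Ioo (z.2 - s) (z.2 + s) ⊆
      V ∩ Ioo (0:ℝ) 1 ×ˢ Ioo (0:ℝ) 1 := by
    rw [← Real.ball_eq_Ioo, ← Real.ball_eq_Ioo, ball_prod_same]
    exact (Metric.ball_subset_ball (min_le_left _ _)).trans hball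
  refine ⟨z.1 - s, z.1 + s, z.2 - s, z.2 + s, ?_, hsub.trans inter_subset_right, by linarith,
    by linarith, ?_⟩
  · constructor <;> constructor <;> linarith
  · calc N * volume.real (Ioo (z.1 - s) (z.1 + s) ×ˢ Ioo (z.2 - s) (z.2 + s))
        < c * volume.real (Ioo (z.1 - s) (z.1 + s) ×ˢ Ioo (z.2 - s) (z.2 + s)) := by
          have : 0 < volume.real (Ioo (z.1 - s) (z.1 + s) ×ˢ Ioo (z.2 - s) (z.2 + s)) := by
            rw [measureReal_Ioo_prod_Ioo (by linarith) (by linarith)]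
            apply mul_pos <;> linarith
          gcongr
      _ ≤ _ := setIntegral_ge_of_const_le_real (measurableSet_Ioo.prod measurableSet_Ioo)
          (volume_Ioo_prod_Ioo_ne_top _ _ _ _) (fun y hy => hfV y (hsub hy).1) hf.integrableOn

/-- Lemma 2.1 of Olshen (2007): for every N ≥ 3 there is a nonnegative Borel
f_N ∈ L¹((0,1)²) with ∫ f_N ≤ 1/N such that every point of the open unit square
lies in an open axis-parallel rectangle of diameter < 1/N on which the average
of f_N exceeds N. -/
theorem stmt7 (N : ℕ) (hN : 3 ≤ N) :
    ∃ f : ℝ × ℝ → ℝ, Measurable f ∧ (∀ x, 0 ≤ f x) ∧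
      IntegrableOn f (Ioo (0:ℝ) 1 ×ˢ Ioo (0:ℝ) 1) ∧
      (∫ x in Ioo (0:ℝ) 1 ×ˢ Ioo (0:ℝ) 1, f x) ≤ 1 / N ∧
      ∀ x ∈ Ioo (0:ℝ) 1 ×ˢ Ioo (0:ℝ) 1,
        ∃ a b c d : ℝ, x ∈ Ioo a b ×ˢ Ioo c d ∧
          Ioo a b ×ˢ Ioo c d ⊆ Ioo (0:ℝ) 1 ×ˢ Ioo (0:ℝ) 1 ∧
          Metric.diam (Ioo a b ×ˢ Ioo c d) < 1 / N ∧
          (∫ y in Ioo a b ×ˢ Ioo c d, f y) >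
            N * (volume (Ioo a b ×ˢ Ioo c d)).toReal := by
  have hN0 : (0:ℝ) < N := by exact_mod_cast (by omega : 0 < N)
  set ε : ℝ := 1 / (4 * N * (N + 1)) with hε
  have hε0 : 0 < ε := by positivity
  obtain ⟨f, hfm, hf0, hfi, hint, hvol⟩ := exists_volume_smallAverageSet_le hN0.le
    (δ := 1 / (2 * N)) (by positivity) hε0 N.succ_pos
  obtain ⟨V, hUV, hVo, hVvol⟩ := Set.exists_isOpen_lt_of_lt _ (ENNReal.ofReal (2 * ε))
    (hvol.trans_lt ((ENNReal.ofReal_lt_ofReal_iff (by positivity)).2 (by linarith)))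
  have hVm := hVo.measurableSet
  have hVreal : volume.real V ≤ 2 * ε := ENNReal.toReal_le_of_le_ofReal (by positivity) hVvol.le
  set g : ℝ × ℝ → ℝ := V.indicator fun _ => (N:ℝ) + 1 with hg
  have hgi : Integrable g := (integrable_indicator_iff hVm).2
    (integrableOn_const (hVvol.trans ENNReal.ofReal_lt_top).ne)
  have hg0 : ∀ z, 0 ≤ g z := fun z => indicator_nonneg (fun _ _ => by positivity) z
  have hFi : Integrable (fun z => f z + g z) := hfi.add hgi
  have hF0 : ∀ z, 0 ≤ f z + g z := fun z => add_nonneg (hf0 z) (hg0 z)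
  refine ⟨fun z => f z + g z, hfm.add (measurable_const.indicator hVm), hF0, hFi.integrableOn,
    ?_, fun z hz => ?_⟩
  · calc ∫ z in Ioo (0:ℝ) 1 ×ˢ Ioo (0:ℝ) 1, (f z + g z)
        ≤ ∫ z, (f z + g z) := setIntegral_le_integral hFi (Filter.Eventually.of_forall hF0)
      _ = (∫ z, f z) + volume.real V * (N + 1) := by
          rw [integral_add hfi hgi, hg, integral_indicator hVm, setIntegral_const, smul_eq_mul]
      _ ≤ 1 / (2 * N) + 2 * ε * (N + 1) := by gcongr
      _ = 1 / N := by rw [hε]; field_simp; norm_num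
  · have hD : 1 / ((N + 1 : ℕ) : ℝ) < 1 / N := by
      push_cast
      gcongr
      linarith
    refine LargeAverageAt.exists_diam_lt ?_ hD
    by_cases hzg : LargeAverageAt N (1 / ((N + 1 : ℕ) : ℝ)) f z
    · exact hzg.mono le_rfl hfi hFi fun x => le_add_of_nonneg_right (hg0 x)
    · refine largeAverageAt_of_isOpen (lt_add_one (N:ℝ)) (by positivity) hFi hVo (fun x hx => ?_)
        (hUV ⟨hz, hzg⟩) hz
      rw [hg, indicator_of_mem hx]
      linarith [hf0 x]
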